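/- arXiv:1706.01579 — 2 statements merged into one kernel-verified Lean document; each statement's English description precedes it below -/
import Mathlib

section
/- For every polynomial P with integer coefficients of degree at least 2 with P(0) = 0, there exists a ladder S ⊆ ℤ⁺ such that S ∩ P(ℤ) = ∅. (In particular, it is not true that S ∩ P(ℤ) is a ladder for every ladder S and every such nonlinear P.) -/
/-- A set `S ⊆ ℤ⁺` is a *ladder* if for every `k ≥ 1`, every coloring `χ : ℤ → Fin k`,
and every length `L`, there is a monochromatic arithmetic progression of length `L`
with common difference in `S`. -/
def IsLadder (S : Set ℤ) : Prop :=
  ∀ k : ℕ, 1 ≤ k → ∀ χ : ℤ → Fin k, ∀ L : ℕ,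
    ∃ a : ℤ, ∃ d ∈ S, ∀ i : ℕ, i < L → χ (a + (i : ℤ) * d) = χ a

/-!
By the finitary van der Waerden theorem, applied to the colorings `x ↦ χ (c * x)`, a set is a ladder
as soon as it contains dilates `{c, 2c, …, nc}` of arbitrarily long initial intervals. If `V` has
density zero, then so does `{c | c * j ∈ V}` for each `j ≥ 1`, and so does a union of finitely many
of these sets; hence some `c > 0` lies outside of it, and the positive integers outside `V` form a
ladder. The values of a polynomial of degree at least 2 have density zero, because `P(x)` grows
faster than `x`.
-/

open Asymptotics Filter
open scoped Finset

section VanDerWaerden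

open Combinatorics

theorem exists_forall_sum_line_eq_nsmul_add {α ι M : Type*} [Fintype ι] [AddCommMonoid M]
    (l : Line α ι) (f : α → M) :
    ∃ b : M, ∀ x, ∑ i, f (l x i) = #{i | l.idxFun i = none} • f x + b := by
  refine ⟨∑ i, (l.idxFun i).elim 0 f, fun x ↦ ?_⟩
  rw [← Finset.sum_const, Finset.sum_filter, ← Finset.sum_add_distrib]
  refine Finset.sum_congr rfl fun i _ ↦ ?_
  cases h : l.idxFun i <;> simp [h]

-- Unlike in `Combinatorics.exists_mono_homothetic_copy`, the ratio is bounded uniformly in `C`.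
theorem exists_bound_mono_homothetic_copy {M : Type*} [AddCommMonoid M] (S : Finset M)
    (κ : Type*) [Finite κ] :
    ∃ n : ℕ, ∀ C : M → κ, ∃ a : ℕ, 0 < a ∧ a ≤ n ∧ ∃ b : M, ∃ color : κ,
      ∀ s ∈ S, C (a • s + b) = color := by
  obtain ⟨ι, _, hι⟩ := Line.exists_mono_in_high_dimension S κ
  refine ⟨Fintype.card ι, fun C ↦ ?_⟩
  obtain ⟨l, color, hl⟩ := hι fun v ↦ C (∑ i, (v i : M))
  obtain ⟨b, hb⟩ := exists_forall_sum_line_eq_nsmul_add l ((↑) : S → M)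
  obtain ⟨i, hi⟩ := l.proper
  refine ⟨#{i | l.idxFun i = none}, Finset.card_pos.mpr ⟨i, by simpa using hi⟩,
    Finset.card_le_univ _, b, color, fun s hs ↦ ?_⟩
  rw [← hl ⟨s, hs⟩]
  exact congrArg C (hb ⟨s, hs⟩).symm

theorem isLadder_of_forall_exists_mul_mem {S : Set ℤ}
    (hS : ∀ n : ℕ, ∃ c : ℤ, ∀ j : ℕ, 0 < j → j ≤ n → c * j ∈ S) : IsLadder S := by
  intro k _ χ L
  obtain ⟨n, hn⟩ :=
    exists_bound_mono_homothetic_copy ((Finset.range (L + 1)).image ((↑) : ℕ → ℤ)) (Fin k)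
  obtain ⟨c, hc⟩ := hS n
  obtain ⟨j, hj_pos, hj_le, b, color, hmono⟩ := hn fun x ↦ χ (c * x)
  have hcolor : ∀ i ≤ L, χ (c * b + i * (c * j)) = color := fun i hi ↦ by
    rw [← hmono i (Finset.mem_image_of_mem _ (Finset.mem_range_succ_iff.mpr hi)), nsmul_eq_mul]
    ring_nf
  refine ⟨c * b, c * j, hc j hj_pos hj_le, fun i hi ↦ ?_⟩
  rw [hcolor i hi.le]
  simpa using (hcolor 0 L.zero_le).symm

end VanDerWaerden

/-- A set of integers has *zero density* if it contains `o(N)` of the integers `1, …, N`. Only its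
positive elements are counted, since a ladder consists of positive integers. -/
def HasZeroDensity (V : Set ℤ) : Prop :=
  (fun N : ℕ ↦ ((V ∩ Set.Ioc 0 (N : ℤ)).ncard : ℝ)) =o[atTop] fun N ↦ (N : ℝ)

namespace HasZeroDensity

variable {V : Set ℤ}

theorem setOf_mul_mem (hV : HasZeroDensity V) {j : ℕ} (hj : 0 < j) :
    HasZeroDensity {c | c * j ∈ V} := by
  have hcount (N : ℕ) : ({c : ℤ | c * j ∈ V} ∩ Set.Ioc 0 (N : ℤ)).ncard ≤
      (V ∩ Set.Ioc 0 ((j * N : ℕ) : ℤ)).ncard := by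
    refine Set.ncard_le_ncard_of_injOn (· * (j : ℤ)) ?_
      (mul_left_injective₀ (by positivity)).injOn ((Set.finite_Ioc _ _).inter_of_right _)
    rintro c ⟨hcV, hc_pos, hc_le⟩
    refine ⟨hcV, by positivity, ?_⟩
    rw [Nat.cast_mul, mul_comm (j : ℤ)]
    gcongr
  have hlinear : (fun N : ℕ ↦ ((j * N : ℕ) : ℝ)) =O[atTop] fun N ↦ (N : ℝ) := by
    simpa using isBigO_const_mul_self (j : ℝ) (fun N : ℕ ↦ (N : ℝ)) atTop
  have hdilate : (fun N : ℕ ↦ ((V ∩ Set.Ioc 0 ((j * N : ℕ) : ℤ)).ncard : ℝ)) =o[atTop]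
      fun N ↦ (N : ℝ) :=
    (hV.comp_tendsto (tendsto_id.const_mul_atTop' hj)).trans_isBigO hlinear
  refine (IsBigO.of_norm_le fun N ↦ ?_).trans_isLittleO hdilate
  simpa using hcount N

theorem biUnion {ι : Type*} {s : Finset ι} {W : ι → Set ℤ} (hW : ∀ i ∈ s, HasZeroDensity (W i)) :
    HasZeroDensity (⋃ i ∈ s, W i) := by
  refine (IsBigO.of_norm_le fun N ↦ ?_).trans_isLittleO (IsLittleO.sum hW)
  rw [Set.iUnion₂_inter]
  simpa using mod_cast s.set_ncard_biUnion_le fun i ↦ W i ∩ Set.Ioc 0 (N : ℤ)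

theorem exists_pos_notMem (hV : HasZeroDensity V) : ∃ c : ℤ, 0 < c ∧ c ∉ V := by
  by_contra! hall
  have hcount (N : ℕ) : (V ∩ Set.Ioc 0 (N : ℤ)).ncard = N := by
    rw [Set.inter_eq_right.mpr fun c hc ↦ hall c hc.1, ← Finset.coe_Ioc, Set.ncard_coe_finset]
    simp
  simp only [HasZeroDensity, hcount] at hV
  refine isLittleO_irrefl ?_ hV
  exact (eventually_gt_atTop 0).frequently.mono fun N hN ↦ by positivity

theorem exists_pos_forall_mul_notMem (hV : HasZeroDensity V) (n : ℕ) :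
    ∃ c : ℤ, 0 < c ∧ ∀ j : ℕ, 0 < j → j ≤ n → c * j ∉ V := by
  have hunion : HasZeroDensity (⋃ j ∈ Finset.Ioc 0 n, {c : ℤ | c * j ∈ V}) :=
    biUnion fun j hj ↦ hV.setOf_mul_mem (Finset.mem_Ioc.mp hj).1
  obtain ⟨c, hc_pos, hc⟩ := hunion.exists_pos_notMem
  refine ⟨c, hc_pos, fun j hj_pos hj_le hjV ↦ hc ?_⟩
  exact Set.mem_biUnion (Finset.mem_Ioc.mpr ⟨hj_pos, hj_le⟩) hjV

theorem isLadder_pos_sdiff (hV : HasZeroDensity V) : IsLadder ({x | 0 < x} \ V) := by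
  refine isLadder_of_forall_exists_mul_mem fun n ↦ ?_
  obtain ⟨c, hc_pos, hc⟩ := hV.exists_pos_forall_mul_notMem n
  exact ⟨c, fun j hj_pos hj_le ↦ ⟨mul_pos hc_pos (mod_cast hj_pos), hc j hj_pos hj_le⟩⟩

end HasZeroDensity

theorem ncard_setOf_exists_eq_inter_Ioc_le {f : ℤ → ℝ} {E : Set ℤ} (hE : E.Finite) {δ : ℝ}
    (hδ : 0 ≤ δ) (hf : ∀ x ∉ E, ‖(x : ℝ)‖ ≤ δ * ‖f x‖) (N : ℕ) :
    ({y : ℤ | ∃ x, f x = y} ∩ Set.Ioc 0 (N : ℤ)).ncard ≤ E.ncard + (2 * ⌊δ * N⌋₊ + 1) := by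
  set m : ℕ := ⌊δ * N⌋₊
  have hsub : {y : ℤ | ∃ x, f x = y} ∩ Set.Ioc 0 (N : ℤ) ⊆
      (fun x ↦ ⌊f x⌋) '' (E ∪ Set.Icc (-m : ℤ) m) := by
    rintro y ⟨⟨x, hxy⟩, hy_pos, hy_le⟩
    refine ⟨x, or_iff_not_imp_left.mpr fun hxE ↦ ?_, by simp [hxy]⟩
    have hfx : ‖f x‖ ≤ N := by
      rw [hxy, Real.norm_of_nonneg (mod_cast hy_pos.le)]
      exact_mod_cast hy_le
    have hxm : x.natAbs ≤ m := Nat.le_floor <| by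
      rw [Nat.cast_natAbs, Int.cast_abs]
      exact (hf x hxE).trans (by gcongr)
    exact Set.mem_Icc.mpr (by omega)
  have hfin := hE.union (Set.finite_Icc (-m : ℤ) m)
  calc _ ≤ ((fun x ↦ ⌊f x⌋) '' (E ∪ Set.Icc (-m : ℤ) m)).ncard :=
        Set.ncard_le_ncard hsub (hfin.image _)
    _ ≤ (E ∪ Set.Icc (-m : ℤ) m).ncard := Set.ncard_image_le hfin
    _ ≤ E.ncard + (Set.Icc (-m : ℤ) m).ncard := Set.ncard_union_le _ _
    _ = E.ncard + (2 * m + 1) := by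
        rw [← Finset.coe_Icc, Set.ncard_coe_finset, Int.card_Icc]
        omega

theorem hasZeroDensity_setOf_exists_eq_of_isLittleO {f : ℤ → ℝ}
    (hf : (fun x : ℤ ↦ (x : ℝ)) =o[cofinite] f) : HasZeroDensity {y | ∃ x, f x = y} := by
  refine isLittleO_iff.mpr fun ε hε ↦ ?_
  set E : Set ℤ := {x | ¬ ‖(x : ℝ)‖ ≤ ε / 3 * ‖f x‖}
  have hE : E.Finite := eventually_cofinite.mp (hf.def (by positivity))
  have hlarge : ∀ᶠ N : ℕ in atTop, (E.ncard + 1 : ℝ) ≤ ε / 3 * N :=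
    (tendsto_natCast_atTop_atTop.const_mul_atTop (by positivity)).eventually_ge_atTop _
  filter_upwards [hlarge] with N hN
  have hcount := ncard_setOf_exists_eq_inter_Ioc_le hE (by positivity) (fun _ ↦ not_not.mp) N
  have hfloor : (⌊ε / 3 * N⌋₊ : ℝ) ≤ ε / 3 * N := Nat.floor_le (by positivity)
  rw [Real.norm_natCast, Real.norm_natCast]
  calc _ ≤ (E.ncard + (2 * ⌊ε / 3 * N⌋₊ + 1) : ℝ) := mod_cast hcount
    _ ≤ ε * N := by linarith

theorem isLittleO_eval_of_two_le_natDegree {α K : Type*} [NormedField K] {P : Polynomial K}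
    (hdeg : 2 ≤ P.natDegree) {l : Filter α} {z : α → K} (hz : Tendsto (‖z ·‖) l atTop) :
    z =o[l] fun x ↦ P.eval (z x) := by
  have hdivX : 0 < P.divX.degree := by
    rw [← Polynomial.natDegree_pos_iff_degree_pos, Polynomial.natDegree_divX_eq_natDegree_tsub_one]
    omega
  have hone : (fun _ ↦ (1 : K)) =o[l] fun x ↦ P.divX.eval (z x) :=
    (isLittleO_const_left_of_ne one_ne_zero).mpr (P.divX.tendsto_norm_atTop hdivX hz)
  have hprod : z =o[l] fun x ↦ P.divX.eval (z x) * z x := by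
    simpa using hone.mul_isBigO (isBigO_refl z l)
  have hconst : (fun _ ↦ P.coeff 0) =o[l] fun x ↦ P.divX.eval (z x) * z x :=
    (isLittleO_const_left.mpr (Or.inr hz)).trans hprod
  have heval (x : α) : P.divX.eval (z x) * z x + P.coeff 0 = P.eval (z x) := by
    conv_rhs => rw [← P.divX_mul_X_add]
    simp
  exact hprod.trans_isBigO (hconst.right_isBigO_add'.congr_right heval)

theorem exists_ladder_disjoint_from_polynomial_values_general (P : Polynomial ℝ)
    (hdeg : 2 ≤ P.natDegree) :
    ∃ S : Set ℤ, S ⊆ {x : ℤ | 0 < x} ∧ IsLadder S ∧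
      S ∩ {y : ℤ | ∃ x : ℤ, P.eval (x : ℝ) = y} = ∅ := by
  have hcast : Tendsto (fun x : ℤ ↦ ‖(x : ℝ)‖) cofinite atTop :=
    tendsto_norm_cocompact_atTop.comp Int.tendsto_coe_cofinite
  have hvalues := hasZeroDensity_setOf_exists_eq_of_isLittleO
    (isLittleO_eval_of_two_le_natDegree hdeg hcast)
  exact ⟨_, Set.sdiff_subset, hvalues.isLadder_pos_sdiff, Set.sdiff_inter_self⟩

/-- For every integer polynomial `P` of degree at least 2 with `P(0) = 0`, there is a
ladder `S ⊆ ℤ⁺` disjoint from the set of values of `P`. -/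
theorem exists_ladder_disjoint_from_polynomial_values (P : Polynomial ℤ)
    (hdeg : 2 ≤ P.natDegree) (hzero : P.eval 0 = 0) :
    ∃ S : Set ℤ, S ⊆ {x : ℤ | 0 < x} ∧ IsLadder S ∧
      S ∩ {y : ℤ | ∃ x : ℤ, P.eval x = y} = ∅ := by
  simpa using exists_ladder_disjoint_from_polynomial_values_general (P.map (Int.castRingHom ℝ))
    (by rwa [Polynomial.natDegree_map_eq_of_injective Int.cast_injective])
end

section
/- If S ⊆ ℤ⁺ has upper density 1, then there exists an infinite set H ⊆ ℤ⁺ such that every positive difference of two elements of H lies in S, i.e., for all h, h' ∈ H with h < h' one has h' − h ∈ S. -/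
/-- `S` has upper density one: `limsup_{n→∞} |S ∩ {1,…,n}| / n = 1`. -/
def HasUpperDensityOne (S : Set ℤ) : Prop :=
  Filter.atTop.limsup (fun n : ℕ => ((S ∩ Set.Icc (1 : ℤ) (n : ℤ)).ncard : ℝ) / n) = 1

/-!
If every interval of `L` consecutive positive integers meets the complement of `S`, then that
complement has at least `⌊n / L⌋` elements in `{1, …, n}`, so `S` has upper density at most
`1 - 1 / L`. Hence a set of upper density one contains arbitrarily long intervals of positive
integers. Given such intervals, `H` is built greedily: to extend a finite set `F` of positive
integers, place an interval `[a, a + ∑ F)` inside `S` and add the element `a + ∑ F`, whose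
difference with each `x ∈ F` lies in that interval.
-/

open Filter Set

section Thick

variable {G : Type*} [AddCommGroup G] [PartialOrder G]

/-- A subset of an ordered group is thick if it contains a translate of every interval `[0, h)`
by a positive element. Positivity makes this a condition on the positive part of the set: a set of
negative integers is never thick, however long the intervals it contains. -/
def IsThick (S : Set G) : Prop :=
  ∀ h : G, ∃ a, 0 < a ∧ Ico a (a + h) ⊆ S

variable [IsOrderedAddMonoid G] {S : Set G}

theorem IsThick.exists_pos_forall_lt_and_sub_mem (hS : IsThick S) (F : Finset G)
    (hF : ∀ x ∈ F, 0 < x) : ∃ y, 0 < y ∧ ∀ x ∈ F, x < y ∧ y - x ∈ S := by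
  obtain ⟨a, ha, haS⟩ := hS (∑ x ∈ F, x)
  have hsum : 0 ≤ ∑ x ∈ F, x := Finset.sum_nonneg fun x hx => (hF x hx).le
  refine ⟨a + ∑ x ∈ F, x, add_pos_of_pos_of_nonneg ha hsum, fun x hx => ?_⟩
  have hx_le : x ≤ ∑ x ∈ F, x :=
    Finset.single_le_sum (f := fun x => x) (fun y hy => (hF y hy).le) hx
  refine ⟨hx_le.trans_lt (lt_add_of_pos_left _ ha), haS ⟨?_, sub_lt_self _ (hF x hx)⟩⟩
  rw [add_sub_assoc]
  exact le_add_of_nonneg_right (sub_nonneg.mpr hx_le)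

theorem IsThick.exists_infinite_difference_set (hS : IsThick S) :
    ∃ H : Set G, H ⊆ {x | 0 < x} ∧ H.Infinite ∧ ∀ h ∈ H, ∀ h' ∈ H, h < h' → h' - h ∈ S := by
  obtain ⟨u, u_pos, hu⟩ := exists_seq_of_forall_finset_exists (fun x : G => 0 < x)
    (fun x y => x < y ∧ y - x ∈ S) hS.exists_pos_forall_lt_and_sub_mem
  have u_strictMono : StrictMono u := fun m n hmn => (hu m n hmn).1
  refine ⟨range u, range_subset_iff.mpr u_pos, infinite_range_of_injective u_strictMono.injective,
    ?_⟩
  rintro _ ⟨m, rfl⟩ _ ⟨n, rfl⟩ hmn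
  exact (hu m n (u_strictMono.lt_iff_lt.mp hmn)).2

end Thick

section UpperDensity

/-- The upper density `limsup_{n→∞} |S ∩ {1,…,n}| / n` of a set of integers, which only depends on
its positive elements. -/
noncomputable def upperDensity (S : Set ℤ) : ℝ :=
  atTop.limsup fun n : ℕ => ((S ∩ Icc (1 : ℤ) n).ncard : ℝ) / n

variable {S T : Set ℤ} {L : ℕ}

theorem le_ncard_inter_Icc_mul (hT : ∀ a : ℤ, 0 < a → (T ∩ Ico a (a + L)).Nonempty) (k : ℕ) :
    k ≤ (T ∩ Icc (1 : ℤ) (k * L : ℕ)).ncard := by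
  induction k with
  | zero => exact Nat.zero_le _
  | succ k ih =>
    obtain ⟨x, hxT, hx_ge, hx_lt⟩ := hT (1 + (k * L : ℕ)) (by positivity)
    have hx_notMem : x ∉ T ∩ Icc (1 : ℤ) (k * L : ℕ) := fun hx => by linarith [hx.2.2]
    have hsucc : ((k + 1) * L : ℕ) = (k * L : ℕ) + (L : ℤ) := by push_cast; ring
    have hsub : insert x (T ∩ Icc (1 : ℤ) (k * L : ℕ)) ⊆ T ∩ Icc (1 : ℤ) ((k + 1) * L : ℕ) :=
      insert_subset ⟨hxT, by omega, by omega⟩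
        (inter_subset_inter_right T (Icc_subset_Icc_right (by omega)))
    calc k + 1 ≤ (T ∩ Icc (1 : ℤ) (k * L : ℕ)).ncard + 1 := Nat.succ_le_succ ih
      _ = (insert x (T ∩ Icc (1 : ℤ) (k * L : ℕ))).ncard :=
        (ncard_insert_of_notMem hx_notMem ((finite_Icc _ _).inter_of_right T)).symm
      _ ≤ (T ∩ Icc (1 : ℤ) ((k + 1) * L : ℕ)).ncard :=
        ncard_le_ncard hsub ((finite_Icc _ _).inter_of_right T)

theorem div_le_ncard_inter_Icc (hT : ∀ a : ℤ, 0 < a → (T ∩ Ico a (a + L)).Nonempty) (n : ℕ) :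
    n / L ≤ (T ∩ Icc (1 : ℤ) n).ncard :=
  (le_ncard_inter_Icc_mul hT (n / L)).trans <|
    ncard_le_ncard
      (inter_subset_inter_right T
        (Icc_subset_Icc_right (Int.ofNat_le.mpr (Nat.div_mul_le_self n L))))
      ((finite_Icc _ _).inter_of_right T)

theorem ncard_inter_Icc_add_ncard_compl_inter_Icc (S : Set ℤ) (n : ℕ) :
    (S ∩ Icc (1 : ℤ) n).ncard + (Sᶜ ∩ Icc (1 : ℤ) n).ncard = n := by
  rw [inter_comm S, inter_comm Sᶜ, ← sdiff_eq,
    ncard_inter_add_ncard_sdiff_eq_ncard _ _ (finite_Icc _ _), ncard_eq_toFinset_card',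
    toFinset_Icc, Int.card_Icc, add_sub_cancel_right, Int.toNat_natCast]

theorem ncard_inter_Icc_div_le (hS : ∀ a : ℤ, 0 < a → (Sᶜ ∩ Ico a (a + L)).Nonempty) {n : ℕ}
    (hn : 0 < n) : ((S ∩ Icc (1 : ℤ) n).ncard : ℝ) / n ≤ 1 - (L : ℝ)⁻¹ + (n : ℝ)⁻¹ := by
  have hn' : (0 : ℝ) < n := Nat.cast_pos.mpr hn
  have hcount : ((S ∩ Icc (1 : ℤ) n).ncard : ℝ) + (n / L : ℕ) ≤ n := by
    exact_mod_cast (Nat.add_le_add_left (div_le_ncard_inter_Icc hS n) _).trans_eq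
      (ncard_inter_Icc_add_ncard_compl_inter_Icc S n)
  have hfloor : (n : ℝ) / L < (n / L : ℕ) + 1 := by
    rw [← Nat.floor_div_eq_div (K := ℝ)]
    exact Nat.lt_floor_add_one _
  rw [div_le_iff₀ hn']
  calc ((S ∩ Icc (1 : ℤ) n).ncard : ℝ) ≤ n - n / L + 1 := by linarith
    _ = (1 - (L : ℝ)⁻¹ + (n : ℝ)⁻¹) * n := by field_simp

theorem upperDensity_le_one_sub_inv
    (hS : ∀ a : ℤ, 0 < a → (Sᶜ ∩ Ico a (a + L)).Nonempty) :
    upperDensity S ≤ 1 - (L : ℝ)⁻¹ := by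
  have hlim : Tendsto (fun n : ℕ => 1 - (L : ℝ)⁻¹ + (n : ℝ)⁻¹) atTop (nhds (1 - (L : ℝ)⁻¹)) := by
    simpa only [add_zero] using tendsto_inv_atTop_nhds_zero_nat.const_add (1 - (L : ℝ)⁻¹)
  calc upperDensity S ≤ atTop.limsup fun n : ℕ => 1 - (L : ℝ)⁻¹ + (n : ℝ)⁻¹ :=
        limsup_le_limsup
          ((eventually_gt_atTop 0).mono fun _ hn => ncard_inter_Icc_div_le hS hn)
          (isCoboundedUnder_le_of_le atTop (x := 0) fun _ => by positivity)
          hlim.isBoundedUnder_le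
    _ = 1 - (L : ℝ)⁻¹ := hlim.limsup_eq

theorem exists_Ico_subset_of_one_sub_inv_lt_upperDensity
    (hS : 1 - (L : ℝ)⁻¹ < upperDensity S) : ∃ a : ℤ, 0 < a ∧ Ico a (a + L) ⊆ S := by
  contrapose! hS
  refine upperDensity_le_one_sub_inv fun a ha => ?_
  obtain ⟨x, hx, hxS⟩ := not_subset.mp (hS a ha)
  exact ⟨x, hxS, hx⟩

theorem isThick_of_upperDensity_eq_one (hS : upperDensity S = 1) : IsThick S := by
  intro h
  -- The successor avoids the length `0`, whose inverse would be `0`.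
  obtain ⟨a, ha, haS⟩ := exists_Ico_subset_of_one_sub_inv_lt_upperDensity (S := S)
    (L := h.toNat + 1) (by rw [hS]; exact sub_lt_self 1 (by positivity))
  exact ⟨a, ha, (Ico_subset_Ico_right (by omega)).trans haS⟩

end UpperDensity

/-- If `S ⊆ ℤ⁺` has upper density 1, then there is an infinite set `H ⊆ ℤ⁺` all of
whose positive pairwise differences lie in `S`. -/
theorem exists_infinite_difference_set_of_upper_density_one (S : Set ℤ)
    (hS : ∀ s ∈ S, 0 < s) (hdens : HasUpperDensityOne S) :
    ∃ H : Set ℤ, H ⊆ {x : ℤ | 0 < x} ∧ H.Infinite ∧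
      ∀ h ∈ H, ∀ h' ∈ H, h < h' → h' - h ∈ S :=
  (isThick_of_upperDensity_eq_one hdens).exists_infinite_difference_set
end
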